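/- Let n ≥ 2, β ≥ 0, and let g : ℝⁿ → [0,∞) be measurable and β-log-concave. For s > 0 set Y(s) := ∫_{ℝⁿ} g(x)^s dx, and when 0 < Y(s) < ∞ let ρ_s(x) := g(x)^s / Y(s). Let T > 0 and T' := T(1 − 1/√n), and suppose Y(1/T), Y(1/T'), and Y((1/T + 1/T')/2) are all finite and positive. Then ∫_{ℝⁿ} √(ρ_{1/T}(x) · ρ_{1/T'}(x)) dx ≥ exp(−(β/T' + 1)/2). -/

import Mathlib

open Real MeasureTheory
open scoped ENNReal Topology Pointwise

theorem bm_one (A B C : Set ℝ) (hA : MeasurableSet A) (hB : MeasurableSet B)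
    (hA0 : A.Nonempty) (hB0 : B.Nonempty) (hC : ∀ a ∈ A, ∀ b ∈ B, a + b ∈ C) :
    volume A + volume B ≤ volume C := by
  obtain ⟨a, ha⟩ := hA0
  obtain ⟨b, hb⟩ := hB0
  have trB : ∀ (x : ℝ) (S : Set ℝ), volume ((fun y => x + y) '' S) = volume S := by
    intro x S; simp
  by_cases hvA : volume A = 0
  · rw [hvA, zero_add, ← trB a B]
    apply measure_mono
    rintro _ ⟨y, hy, rfl⟩
    exact hC a ha y hy
  by_cases hvB : volume B = 0
  · rw [hvB, add_zero, ← trB b A]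
    apply measure_mono
    rintro _ ⟨y, hy, rfl⟩
    show b + y ∈ C
    rw [add_comm]; exact hC y hy b hb
  by_contra hlt
  push Not at hlt
  obtain ⟨r, hr, r', hr', h⟩ := ENNReal.exists_lt_add_of_lt_add hlt hvA hvB
  obtain ⟨K, hKA, hK, hrK⟩ := hA.exists_lt_isCompact hr
  obtain ⟨L, hLB, hL, hrL⟩ := hB.exists_lt_isCompact hr'
  have hK0 : K.Nonempty := by
    rcases K.eq_empty_or_nonempty with h | h
    · simp [h] at hrK
    · exact h
  have hL0 : L.Nonempty := by
    rcases L.eq_empty_or_nonempty with h | h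
    · simp [h] at hrL
    · exact h
  obtain ⟨k, hk, hkm⟩ := hK.exists_isGreatest hK0
  obtain ⟨l, hl, hlm⟩ := hL.exists_isLeast hL0
  have hsub : ((fun y => l + y) '' K) ∪ ((fun y => k + y) '' L) ⊆ C := by
    rintro _ (⟨y, hy, rfl⟩ | ⟨y, hy, rfl⟩)
    · show l + y ∈ C
      rw [add_comm]; exact hC _ (hKA hy) _ (hLB hl)
    · exact hC _ (hKA hk) _ (hLB hy)
  have hdis : AEDisjoint volume ((fun y => l + y) '' K) ((fun y => k + y) '' L) := by
    refine measure_mono_null (t := {k + l}) ?_ (by simp)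
    rintro x ⟨⟨y, hy, rfl⟩, ⟨z, hz, hzy⟩⟩
    have h1 := hkm hy
    have h2 := hlm hz
    simp only at hzy
    simp only [Set.mem_singleton_iff]
    linarith
  have hm : MeasurableSet ((fun y => k + y) '' L) :=
    (hL.image (by fun_prop)).measurableSet
  have := measure_mono (μ := volume) hsub
  rw [measure_union₀ hm.nullMeasurableSet hdis, trB, trB] at this
  have h3 := ENNReal.add_lt_add hrK hrL
  exact absurd (h.trans (h3.trans_le this)) (lt_irrefl _)

theorem bm_one' (A B C : Set ℝ) (hA : MeasurableSet A) (hB : MeasurableSet B)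
    (hA0 : A.Nonempty) (hB0 : B.Nonempty) {p q : ℝ} (hp : 0 < p) (hq : 0 < q)
    (hC : ∀ a ∈ A, ∀ b ∈ B, p * a + q * b ∈ C) :
    ENNReal.ofReal p * volume A + ENNReal.ofReal q * volume B ≤ volume C := by
  have key : ∀ (r : ℝ), 0 < r → ∀ S : Set ℝ, MeasurableSet S → 
      MeasurableSet ((fun y => r * y) '' S) ∧
      volume ((fun y => r * y) '' S) = ENNReal.ofReal r * volume S := by
    intro r hr S hS
    have : (fun y => r * y) '' S = r • S := rfl
    rw [this]
    refine ⟨hS.const_smul₀ r, ?_⟩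
    rw [Measure.addHaar_smul]
    simp [abs_of_pos hr]
  rw [← (key p hp A hA).2, ← (key q hq B hB).2]
  apply bm_one _ _ _ (key p hp A hA).1 (key q hq B hB).1 (hA0.image _) (hB0.image _)
  rintro _ ⟨a, ha, rfl⟩ _ ⟨b, hb, rfl⟩
  exact hC a ha b hb

theorem layer_one (F : ℝ → ℝ≥0∞) (hF : Measurable F) (h1 : ∀ x, F x ≤ 1) :
    ∫⁻ x, F x = ∫⁻ t in Set.Ioo (0:ℝ) 1, volume {x | ENNReal.ofReal t < F x} := by
  have hfin : ∀ x, F x ≠ ∞ := fun x => ne_top_of_le_ne_top ENNReal.one_ne_top (h1 x)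
  have h := lintegral_eq_lintegral_meas_lt (volume : Measure ℝ) (f := fun x => (F x).toReal)
    (Filter.Eventually.of_forall fun x => ENNReal.toReal_nonneg) (by fun_prop)
  have e1 : ∫⁻ x, F x = ∫⁻ x, ENNReal.ofReal ((F x).toReal) := by
    apply lintegral_congr; intro x; rw [ENNReal.ofReal_toReal (hfin x)]
  rw [e1, h]
  have hU : Set.Ioi (0:ℝ) = Set.Ioo 0 1 ∪ Set.Ici 1 := by
    ext x; simp only [Set.mem_Ioi, Set.mem_union, Set.mem_Ioo, Set.mem_Ici]
    constructor
    · intro hx; rcases lt_or_ge x 1 with h | h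
      · exact Or.inl ⟨hx, h⟩
      · exact Or.inr h
    · rintro (h | h)
      · exact h.1
      · linarith
  have hdisj : Disjoint (Set.Ioo (0:ℝ) 1) (Set.Ici 1) := by
    rw [Set.disjoint_left]; intro x hx hx'; exact absurd hx.2 (not_lt.2 hx')
  rw [hU, lintegral_union measurableSet_Ici hdisj]
  have z : ∫⁻ t in Set.Ici (1:ℝ), volume {a | t < (F a).toReal} = 0 := by
    rw [setLIntegral_congr_fun (g := fun _ => 0) measurableSet_Ici]
    · simp
    · intro t ht
      have : {a | t < (F a).toReal} = ∅ := by
        ext a; simp only [Set.mem_ofPred_eq, Set.mem_empty_iff_false, iff_false, not_lt]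
        refine le_trans ?_ (show (1:ℝ) ≤ t from ht)
        exact ENNReal.toReal_le_of_le_ofReal zero_le_one (by simpa using h1 a)
      simp [this]
  rw [z, add_zero]
  apply setLIntegral_congr_fun measurableSet_Ioo
  intro t ht
  simp only
  congr 1
  ext a
  simp only [Set.mem_ofPred_eq]
  exact (ENNReal.ofReal_lt_iff_lt_toReal ht.1.le (hfin a)).symm

theorem amgm_enn (x y : ℝ≥0∞) {p q : ℝ} (hp : 0 < p) (hq : 0 < q) (hpq : p + q = 1) :
    x ^ p * y ^ q ≤ ENNReal.ofReal p * x + ENNReal.ofReal q * y := by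
  rcases eq_or_ne x ∞ with rfl | hx
  · rw [ENNReal.mul_top (by simpa using hp)]; simp
  rcases eq_or_ne y ∞ with rfl | hy
  · rw [ENNReal.mul_top (by simpa using hq)]; simp
  lift x to NNReal using hx
  lift y to NNReal using hy
  rw [← ENNReal.coe_rpow_of_nonneg _ hp.le, ← ENNReal.coe_rpow_of_nonneg _ hq.le]
  unfold ENNReal.ofReal
  have := NNReal.geom_mean_le_arith_mean2_weighted p.toNNReal q.toNNReal x y
    (by rw [← Real.toNNReal_add hp.le hq.le, hpq]; simp)
  rw [Real.coe_toNNReal _ hp.le, Real.coe_toNNReal _ hq.le] at this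
  exact_mod_cast this

theorem pl_one_norm (f g h : ℝ → ℝ≥0∞) (hf : Measurable f) (hg : Measurable g)
    (hh : Measurable h) {p q : ℝ} (hp : 0 < p) (hq : 0 < q) (hpq : p + q = 1)
    (sf : ⨆ x, f x = 1) (sg : ⨆ x, g x = 1)
    (H : ∀ x y, f x ^ p * g y ^ q ≤ h (p * x + q * y)) :
    (∫⁻ x, f x) ^ p * (∫⁻ x, g x) ^ q ≤ ∫⁻ x, h x := by
  have f1 : ∀ x, f x ≤ 1 := fun x => sf ▸ le_iSup f x
  have g1 : ∀ x, g x ≤ 1 := fun x => sg ▸ le_iSup g x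
  refine (amgm_enn _ _ hp hq hpq).trans ?_
  refine le_trans ?_ (lintegral_mono (f := fun x => min (h x) 1) fun x => min_le_left _ _)
  rw [layer_one f hf f1, layer_one g hg g1,
    layer_one _ (hh.min measurable_const) (fun x => min_le_right _ _)]
  have mono : ∀ F : ℝ → ℝ≥0∞, Measurable fun t : ℝ => volume {x | ENNReal.ofReal t < F x} := by
    intro F
    apply Antitone.measurable
    intro s t hst
    apply measure_mono
    intro x hx
    exact lt_of_le_of_lt (ENNReal.ofReal_le_ofReal hst) hx
  rw [← lintegral_const_mul _ (mono f), ← lintegral_const_mul _ (mono g),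
    ← lintegral_add_left ((mono f).const_mul _)]
  apply setLIntegral_mono' measurableSet_Ioo
  intro t ht
  have ht1 : ENNReal.ofReal t < 1 := by simpa using ht.2
  apply bm_one' _ _ _ (measurableSet_lt measurable_const hf)
    (measurableSet_lt measurable_const hg) _ _ hp hq
  · intro a ha b hb
    refine lt_min ?_ ht1
    refine lt_of_lt_of_le ?_ (H a b)
    have e : ENNReal.ofReal t = ENNReal.ofReal t ^ p * ENNReal.ofReal t ^ q := by
      rw [← ENNReal.rpow_add_of_nonneg _ _ hp.le hq.le, hpq, ENNReal.rpow_one]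
    rw [e]
    exact ENNReal.mul_lt_mul (ENNReal.rpow_lt_rpow ha hp) (ENNReal.rpow_lt_rpow hb hq)
  · rw [← sf] at ht1
    exact lt_iSup_iff.1 ht1
  · rw [← sg] at ht1
    exact lt_iSup_iff.1 ht1

theorem pl_one_bdd (f g h : ℝ → ℝ≥0∞) (hf : Measurable f) (hg : Measurable g)
    (hh : Measurable h) {p q : ℝ} (hp : 0 < p) (hq : 0 < q) (hpq : p + q = 1)
    (sf : ⨆ x, f x ≠ ∞) (sg : ⨆ x, g x ≠ ∞)
    (H : ∀ x y, f x ^ p * g y ^ q ≤ h (p * x + q * y)) :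
    (∫⁻ x, f x) ^ p * (∫⁻ x, g x) ^ q ≤ ∫⁻ x, h x := by
  by_cases mf : ⨆ x, f x = 0
  · have : ∀ x, f x = 0 := by simpa using mf
    simp [this, hp]
  by_cases mg : ⨆ x, g x = 0
  · have : ∀ x, g x = 0 := by simpa using mg
    simp [this, hq]
  set M := ⨆ x, f x with hM
  set N := ⨆ x, g x with hN
  have := pl_one_norm (fun x => M⁻¹ * f x) (fun x => N⁻¹ * g x)
    (fun x => ((M⁻¹) ^ p * (N⁻¹) ^ q) * h x) (by fun_prop) (by fun_prop) (by fun_prop) hp hq hpq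
    (by rw [← ENNReal.mul_iSup, ← hM]; exact ENNReal.inv_mul_cancel mf sf)
    (by rw [← ENNReal.mul_iSup, ← hN]; exact ENNReal.inv_mul_cancel mg sg)
    (by
      intro x y
      rw [ENNReal.mul_rpow_of_nonneg _ _ hp.le, ENNReal.mul_rpow_of_nonneg _ _ hq.le,
        mul_mul_mul_comm]
      gcongr
      exact H x y)
  rw [lintegral_const_mul _ hf, lintegral_const_mul _ hg, lintegral_const_mul _ hh,
    ENNReal.mul_rpow_of_nonneg _ _ hp.le, ENNReal.mul_rpow_of_nonneg _ _ hq.le,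
    mul_mul_mul_comm] at this
  refine (ENNReal.mul_le_mul_iff_right ?_ ?_).1 this
  · refine mul_ne_zero ?_ ?_
    · simp [ENNReal.rpow_eq_zero_iff, sf, mf]
    · simp [ENNReal.rpow_eq_zero_iff, sg, mg]
  · refine ENNReal.mul_ne_top ?_ ?_
    · exact ENNReal.rpow_ne_top_of_nonneg hp.le (by simpa using mf)
    · exact ENNReal.rpow_ne_top_of_nonneg hq.le (by simpa using mg)

theorem pl_one (f g h : ℝ → ℝ≥0∞) (hf : Measurable f) (hg : Measurable g)
    (hh : Measurable h) {p q : ℝ} (hp : 0 < p) (hq : 0 < q) (hpq : p + q = 1)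
    (H : ∀ x y, f x ^ p * g y ^ q ≤ h (p * x + q * y)) :
    (∫⁻ x, f x) ^ p * (∫⁻ x, g x) ^ q ≤ ∫⁻ x, h x := by
  by_cases mf : ∫⁻ x, f x = 0
  · simp [mf, hp]
  by_cases mg : ∫⁻ x, g x = 0
  · simp [mg, hq]
  have tr : ∀ F : ℝ → ℝ≥0∞, Measurable F →
      Filter.Tendsto (fun k : ℕ => ∫⁻ x, min (F x) (k:ℝ≥0∞)) Filter.atTop (𝓝 (∫⁻ x, F x)) := by
    intro F hF
    apply lintegral_tendsto_of_tendsto_of_monotone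
    · intro k; exact (hF.min measurable_const).aemeasurable
    · refine Filter.Eventually.of_forall fun x => ?_
      intro i j hij
      exact min_le_min le_rfl (by exact_mod_cast hij)
    · refine Filter.Eventually.of_forall fun x => ?_
      have := (tendsto_const_nhds (x := F x)).min ENNReal.tendsto_nat_nhds_top
      simpa using this
  have lim := ENNReal.Tendsto.mul ((tr f hf).ennrpow_const p)
    (Or.inl (by simp [ENNReal.rpow_eq_zero_iff, mf, hp.not_gt]))
    ((tr g hg).ennrpow_const q) (Or.inl (by simp [ENNReal.rpow_eq_zero_iff, mg, hq.not_gt]))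
  refine le_of_tendsto' lim fun k => ?_
  have bd : ∀ F : ℝ → ℝ≥0∞, ⨆ x, min (F x) (k:ℝ≥0∞) ≠ ∞ := fun F =>
    ne_top_of_le_ne_top (ENNReal.natCast_ne_top k) (iSup_le fun x => min_le_right _ _)
  refine pl_one_bdd _ _ h (hf.min measurable_const) (hg.min measurable_const) hh hp hq hpq
    (bd f) (bd g) fun x y => le_trans ?_ (H x y)
  gcongr
  · exact min_le_left _ _
  · exact min_le_left _ _

theorem pl_n {p q : ℝ} (hp : 0 < p) (hq : 0 < q) (hpq : p + q = 1) (n : ℕ) :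
    ∀ (f g h : (Fin n → ℝ) → ℝ≥0∞), Measurable f → Measurable g → Measurable h →
    (∀ x y, f x ^ p * g y ^ q ≤ h (p • x + q • y)) →
    (∫⁻ x, f x) ^ p * (∫⁻ x, g x) ^ q ≤ ∫⁻ x, h x := by
  induction n with
  | zero =>
    intro f g h hf hg hh H
    simp only [lintegral_unique]
    have hv : (volume : Measure (Fin 0 → ℝ)) Set.univ = 1 := by
      simp [volume_pi]
    simp only [hv, mul_one]
    exact (H _ _).trans (le_of_eq (congrArg h (Subsingleton.elim _ _)))
  | succ n ih =>
    intro f g h hf hg hh H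
    let e := (MeasurableEquiv.piFinSuccAbove (fun _ : Fin (n+1) => ℝ) 0).symm
    have he : ∀ z, e z = Fin.cons z.1 z.2 := by intro z; simp [e, MeasurableEquiv.piFinSuccAbove]; rfl
    have mp := (volume_preserving_piFinSuccAbove (fun _ : Fin (n+1) => ℝ) 0).symm
    have I : ∀ F : (Fin (n+1) → ℝ) → ℝ≥0∞, Measurable F →
        ∫⁻ x, F x = ∫⁻ a : ℝ, ∫⁻ b : Fin n → ℝ, F (e (a, b)) := by
      intro F hF
      rw [← mp.lintegral_comp hF]
      exact lintegral_prod _ ((hF.comp e.measurable).aemeasurable)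
    have Mm : ∀ F : (Fin (n+1) → ℝ) → ℝ≥0∞, Measurable F → ∀ a : ℝ,
        Measurable fun b => F (e (a, b)) := by
      intro F hF a
      exact hF.comp (e.measurable.comp (by fun_prop))
    have M : ∀ F : (Fin (n+1) → ℝ) → ℝ≥0∞, Measurable F →
        Measurable fun a : ℝ => ∫⁻ b : Fin n → ℝ, F (e (a, b)) := by
      intro F hF
      exact (hF.comp e.measurable).lintegral_prod_right'
    rw [I f hf, I g hg, I h hh]
    refine pl_one _ _ _ (M f hf) (M g hg) (M h hh) hp hq hpq fun x y => ?_
    refine ih _ _ _ (Mm f hf x) (Mm g hg y) (Mm h hh _) fun v w => ?_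
    have := H (e (x, v)) (e (y, w))
    refine this.trans (le_of_eq ?_)
    congr 1
    simp only [he]
    ext i
    refine Fin.cases ?_ (fun j => ?_) i <;> simp

theorem scale_n (n : ℕ) (F : (Fin n → ℝ) → ℝ≥0∞) (hF : Measurable F) (s : ℝ) (hs : 0 < s) :
    ∫⁻ x, F (s⁻¹ • x) = ENNReal.ofReal (s ^ n) * ∫⁻ x, F x := by
  have h := Measure.map_addHaar_smul (volume : Measure (Fin n → ℝ)) (inv_ne_zero hs.ne')
  have h2 : ∫⁻ x, F (s⁻¹ • x) = ∫⁻ y, F y ∂(Measure.map (fun x : Fin n → ℝ => s⁻¹ • x) volume) :=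
    (lintegral_map hF (by fun_prop)).symm
  rw [h2, h, lintegral_smul_measure]
  simp [abs_of_pos hs]

theorem sc_pl (n : ℕ) (β : ℝ) (g : (Fin n → ℝ) → ℝ) (hgm : Measurable g) (hg0 : ∀ x, 0 ≤ g x)
    (hlc : ∀ x y : Fin n → ℝ, ∀ l : ℝ, l ∈ Set.Icc (0:ℝ) 1 →
      Real.exp (-β) * g x ^ l * g y ^ (1 - l) ≤ g (l • x + (1 - l) • y))
    {p q s t u : ℝ} (hp : 0 < p) (hq : 0 < q) (hpq : p + q = 1) (hs : 0 < s) (ht : 0 < t)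
    (hu : u = p * s + q * t) :
    (ENNReal.ofReal (s ^ n) * ∫⁻ x, ENNReal.ofReal (g x) ^ s) ^ p *
      (ENNReal.ofReal (t ^ n) * ∫⁻ x, ENNReal.ofReal (g x) ^ t) ^ q ≤
    ENNReal.ofReal (Real.exp (β * u)) *
      (ENNReal.ofReal (u ^ n) * ∫⁻ x, ENNReal.ofReal (g x) ^ u) := by
  have hu0 : 0 < u := by rw [hu]; positivity
  have hm : ∀ r : ℝ, Measurable fun x => ENNReal.ofReal (g x) ^ r := fun r => by fun_prop
  rw [← scale_n n _ (hm s) s hs, ← scale_n n _ (hm t) t ht, ← scale_n n _ (hm u) u hu0,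
    ← lintegral_const_mul _ (by fun_prop)]
  refine pl_n hp hq hpq n _ _ _ (by fun_prop) (by fun_prop) (by fun_prop) fun x y => ?_
  set l := p * s / u with hl
  have hl1 : 1 - l = q * t / u := by rw [hl]; field_simp; rw [hu]; ring
  have hl0 : 0 ≤ l := by positivity
  have hl2 : 0 ≤ 1 - l := by rw [hl1]; positivity
  have h := hlc (s⁻¹ • x) (t⁻¹ • y) l ⟨hl0, by linarith⟩
  have hW : l • s⁻¹ • x + (1 - l) • t⁻¹ • y = u⁻¹ • (p • x + q • y) := by
    rw [hl1, hl]
    ext i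
    simp only [Pi.add_apply, Pi.smul_apply, smul_eq_mul]
    field_simp
  rw [hW] at h
  set A := g (s⁻¹ • x)
  set B := g (t⁻¹ • y)
  set W := g (u⁻¹ • (p • x + q • y))
  have hA : 0 ≤ A := hg0 _
  have hB : 0 ≤ B := hg0 _
  have hW0 : 0 ≤ W := hg0 _
  have h2 := Real.rpow_le_rpow (by positivity) h hu0.le
  rw [Real.mul_rpow (by positivity) (by positivity), Real.mul_rpow (by positivity) (by positivity),
    ← Real.rpow_mul hA, ← Real.rpow_mul hB, ← Real.exp_mul] at h2
  have e1 : l * u = s * p := by rw [hl]; field_simp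
  have e2 : (1 - l) * u = t * q := by rw [hl1]; field_simp
  rw [e1, e2] at h2
  have h3 : A ^ (s * p) * B ^ (t * q) ≤ Real.exp (β * u) * W ^ u := by
    calc A ^ (s * p) * B ^ (t * q) 
        = Real.exp (β * u) * (Real.exp (-β * u) * A ^ (s * p) * B ^ (t * q)) := by
          rw [← mul_assoc, ← mul_assoc, ← Real.exp_add]; simp
      _ ≤ _ := by gcongr
  rw [← ENNReal.rpow_mul, ← ENNReal.rpow_mul, ENNReal.ofReal_rpow_of_nonneg hA (by positivity),
    ENNReal.ofReal_rpow_of_nonneg hB (by positivity), ENNReal.ofReal_rpow_of_nonneg hW0 hu0.le,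
    ← ENNReal.ofReal_mul (by positivity), ← ENNReal.ofReal_mul (by positivity)]
  exact ENNReal.ofReal_le_ofReal h3

theorem core_real (n : ℕ) (hn : 2 ≤ n) (β : ℝ) (L : ℝ → ℝ)
    (hconv : ∀ p q s t, 0 < p → 0 < q → p + q = 1 → 0 < s → 0 < t →
      L (p * s + q * t) ≤ p * L s + q * L t)
    (hpl : ∀ p q s t, 0 < p → 0 < q → p + q = 1 → 0 < s → 0 < t →
      p * (n * Real.log s + L s) + q * (n * Real.log t + L t) ≤
        β * (p * s + q * t) + n * Real.log (p * s + q * t) + L (p * s + q * t))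
    (T T' : ℝ) (hT : 0 < T) (hT' : T' = T * (1 - 1 / Real.sqrt n)) :
    L (1 / T) + L (1 / T') - 2 * L ((1 / T + 1 / T') / 2) ≤ β / T' + 1 := by
  obtain ⟨m, hm⟩ : ∃ m, m = Real.sqrt n := ⟨_, rfl⟩
  have hnm : (n : ℝ) = m ^ 2 := by rw [hm, Real.sq_sqrt (by positivity)]
  have hn' : (2:ℝ) ≤ n := by exact_mod_cast hn
  have hm0 : 0 ≤ m := by rw [hm]; positivity
  have hm1 : 1.414 ≤ m := by nlinarith
  have h1 : 0 < m - 1 := by linarith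
  have h2 : 0 < 2 * m - 1 := by linarith
  obtain ⟨c, hc⟩ : ∃ c, c = (1 / T + 1 / T') / 2 := ⟨_, rfl⟩
  rw [← hm] at hT'
  have hT2 : T' = T * ((m - 1) / m) := by rw [hT']; field_simp
  have hc2 : c = (2 * m - 1) / (2 * T * (m - 1)) := by
    rw [hc, hT2]; field_simp; ring
  have ha : 1 / T = c * (2 * (m - 1) / (2 * m - 1)) := by
    rw [hc2]; field_simp
  have hb : 1 / T' = c * (2 * m / (2 * m - 1)) := by
    rw [hc2, hT2]
    have h2' : 2 * m - 1 ≠ 0 := h2.ne'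
    rw [div_mul_div_comm, mul_comm (2 * m - 1), mul_div_mul_right _ _ h2']
    field_simp
  have hc0 : 0 < c := by
    have : 0 < 1 / T := by positivity
    rw [ha] at this
    exact pos_of_mul_pos_left this (by positivity)
  rw [← hc, show β / T' = β * (1 / T') by ring, ha, hb]
  clear ha hb hT' hc hT hT2 hc2
  rcases eq_or_lt_of_le hn with h | h
  · -- n = 2
    subst h
    have P := hpl ((2*m-1)/(2*m)) (1/(2*m)) (c * (2 * (m - 1) / (2 * m - 1))) (c * 2)
      (by positivity) (by positivity) (by field_simp; ring) (by positivity) (by positivity)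
    have e1 : (2*m-1)/(2*m) * (c * (2 * (m - 1) / (2 * m - 1))) + 1/(2*m) * (c * 2) = c := by
      field_simp; ring
    have Q := hconv ((2*m-2)/(2*m-1)) (1/(2*m-1)) c (c*2)
      (div_pos (by linarith) h2) (by positivity) (by field_simp; ring) hc0 (by positivity)
    have e2 : (2*m-2)/(2*m-1) * c + 1/(2*m-1) * (c*2) = c * (2 * m / (2 * m - 1)) := by
      field_simp; ring
    rw [e1, Real.log_mul hc0.ne' (by positivity), Real.log_mul hc0.ne' (by norm_num)] at P
    rw [e2] at Q
    set X := L (c * (2 * (m - 1) / (2 * m - 1)))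
    set Y := L (c * (2 * m / (2 * m - 1)))
    set Z := L (c * 2)
    have P2 := mul_le_mul_of_nonneg_left P (show 0 ≤ 2 * m / (2*m-1) by positivity)
    have P3 : ((2:ℕ):ℝ) * (log c + log (2 * (m - 1) / (2 * m - 1))) + X
        + 1/(2*m-1) * (((2:ℕ):ℝ) * (log c + log 2) + Z) ≤
        2 * m / (2*m-1) * (β * c + ((2:ℕ):ℝ) * log c + L c) := by
      refine le_trans (le_of_eq ?_) P2
      field_simp
    push_cast at P3
    have hE : - log (2 * (m - 1) / (2 * m - 1)) - 1/(2*m-1) * log 2 ≤ 1/2 := by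
      have hl := Real.log_two_lt_d9
      have hm2 : m ^ 2 = 2 := by rw [← hnm]; norm_num
      have hm3 : m ≤ 1.415 := by nlinarith
      have d : log (2 * (m - 1) / (2 * m - 1)) = log (4 * (m-1) / (2*m-1)) - log 2 := by
        rw [← Real.log_div (by positivity) (by norm_num)]
        congr 1; field_simp; ring
      have k := Real.one_sub_inv_le_log_of_pos (show 0 < 4 * (m-1) / (2*m-1) by positivity)
      have k1 : (4 * (m-1) / (2*m-1))⁻¹ ≤ 1.12 := by
        rw [inv_div, div_le_iff₀ (by positivity)]; linarith
      have k2 : 1/1.83 ≤ 1/(2*m-1) := by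
        apply one_div_le_one_div_of_le h2; linarith
      have k3 : (1/1.83) * log 2 ≤ 1/(2*m-1) * log 2 := by
        have := Real.log_pos (show (1:ℝ) < 2 by norm_num)
        gcongr
      rw [d]
      norm_num at *
      linarith
    have e3 : 2 * m / (2*m-1) = 1 + 1/(2*m-1) := by field_simp; ring
    have e4 : (2*m-2) / (2*m-1) = 1 - 1/(2*m-1) := by field_simp; ring
    rw [e3] at P3 ⊢
    rw [e4] at Q
    nlinarith
  · -- n ≥ 3
    have hn3 : (3:ℝ) ≤ n := by exact_mod_cast h
    have hm3 : 1.71 ≤ m := by nlinarith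
    have h3 : 0 < 2 * m - 3 := by linarith
    have P := hpl ((2*m+1)/(4*m)) ((2*m-1)/(4*m)) (c * ((2*m-1)/(2*m+1))) (c * ((2*m+1)/(2*m-1)))
      (by positivity) (by positivity) (by field_simp; ring) (by positivity) (by positivity)
    have e1 : (2*m+1)/(4*m) * (c * ((2*m-1)/(2*m+1))) + (2*m-1)/(4*m) * (c * ((2*m+1)/(2*m-1)))
       = c := by field_simp; ring
    have Q1 := hconv ((2*m+1)/(2*(2*m-1))) ((2*m-3)/(2*(2*m-1))) (c * ((2*m-1)/(2*m+1))) c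
      (by positivity) (by positivity) (by field_simp; ring) (by positivity) (by positivity)
    have e2 : (2*m+1)/(2*(2*m-1)) * (c * ((2*m-1)/(2*m+1))) + (2*m-3)/(2*(2*m-1)) * c
       = c * (2 * (m - 1) / (2 * m - 1)) := by field_simp; ring
    have Q2 := hconv (1/2) (1/2) (c * ((2*m+1)/(2*m-1))) c
      (by positivity) (by positivity) (by norm_num) (by positivity) (by positivity)
    have e3 : 1/2 * (c * ((2*m+1)/(2*m-1))) + 1/2 * c = c * (2 * m / (2 * m - 1)) := by
      field_simp; ring
    have e4 : log ((2*m-1)/(2*m+1)) = - log ((2*m+1)/(2*m-1)) := by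
      rw [← Real.log_inv, inv_div]
    rw [e1, Real.log_mul hc0.ne' (by positivity), Real.log_mul hc0.ne' (by positivity), e4] at P
    rw [e2] at Q1
    rw [e3] at Q2
    have hr : m^2 / (2*m-1) * log ((2*m+1)/(2*m-1)) ≤ 1 := by
      have y0 : 0 < (2*m+1)/(2*m-1) := by positivity
      have y1 : 1 ≤ (2*m+1)/(2*m-1) := by rw [le_div_iff₀ h2]; linarith
      have k : log ((2*m+1)/(2*m-1)) ≤ 2/(2*m-1) := by
        refine (Real.log_le_sub_one_of_pos y0).trans (le_of_eq ?_)
        field_simp; ring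
      calc m^2 / (2*m-1) * log ((2*m+1)/(2*m-1)) ≤ m^2 / (2*m-1) * (2/(2*m-1)) := by gcongr
        _ ≤ 1 := by
          rw [div_mul_div_comm, div_le_one (by positivity)]
          nlinarith
    set X := L (c * ((2*m-1)/(2*m+1)))
    set Y := L (c * ((2*m+1)/(2*m-1)))
    set A := L (c * (2 * (m - 1) / (2 * m - 1)))
    set B := L (c * (2 * m / (2 * m - 1)))
    set r := log ((2*m+1)/(2*m-1))
    have P2 := mul_le_mul_of_nonneg_left P (show 0 ≤ 2 * m / (2*m-1) by positivity)
    have P3 : (2*m+1)/(2*(2*m-1)) * X + 1/2 * Y + n * log c * (2 * m / (2*m-1)) - n * r / (2*m-1)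
        ≤ 2 * m / (2*m-1) * (β * c + n * log c + L c) := by
      refine le_trans (le_of_eq ?_) P2
      field_simp
      ring
    have e5 : (2*m-3)/(2*(2*m-1)) = 3/2 - 2 * m / (2*m-1) := by field_simp; ring
    have e6 : n * r / (2*m-1) = m^2 / (2*m-1) * r := by rw [hnm]; ring
    rw [e5] at Q1
    rw [e6] at P3
    nlinarith

/-- Overlap bound for adjacent annealing distributions:
`∫ √(ρ_{1/T} ρ_{1/T'}) ≥ exp(−(β/T' + 1)/2)` where `T' = T(1 − 1/√n)`. -/
theorem overlap_bound (n : ℕ) (hn : 2 ≤ n) (β : ℝ) (hβ : 0 ≤ β)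
    (g : (Fin n → ℝ) → ℝ) (hgm : Measurable g) (hg0 : ∀ x, 0 ≤ g x)
    (hlc : ∀ x y : Fin n → ℝ, ∀ l : ℝ, l ∈ Set.Icc (0:ℝ) 1 →
      Real.exp (-β) * g x ^ l * g y ^ (1 - l) ≤ g (l • x + (1 - l) • y))
    (Y : ℝ → ℝ) (hY : ∀ s, Y s = ∫ x, g x ^ s)
    (T T' : ℝ) (hT : 0 < T) (hT' : T' = T * (1 - 1 / Real.sqrt n))
    (hiT : Integrable (fun x => g x ^ (1 / T)))
    (hiT' : Integrable (fun x => g x ^ (1 / T')))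
    (hiTT : Integrable (fun x => g x ^ ((1 / T + 1 / T') / 2)))
    (hYT : 0 < Y (1 / T)) (hYT' : 0 < Y (1 / T'))
    (hYTT : 0 < Y ((1 / T + 1 / T') / 2)) :
    Real.exp (-(β / T' + 1) / 2)
      ≤ ∫ x, Real.sqrt ((g x ^ (1 / T) / Y (1 / T)) * (g x ^ (1 / T') / Y (1 / T'))) := by
  have hT'0 : 0 < T' := by
    have hn' : (1:ℝ) < n := by exact_mod_cast hn
    have : 1 < Real.sqrt n := by rw [Real.lt_sqrt] <;> norm_num; exact_mod_cast hn
    rw [hT']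
    apply mul_pos hT
    rw [sub_pos, div_lt_one (by linarith)]; exact this
  have ha : 0 < 1 / T := by positivity
  have hb : 0 < 1 / T' := by positivity
  set a := 1 / T with hadef
  set b := 1 / T' with hbdef
  have hm : ∀ r : ℝ, Measurable fun x => ENNReal.ofReal (g x) ^ r := fun r => by fun_prop
  -- relation of `Y` and lower integrals
  have hYZ : ∀ s, 0 < s → Y s = (∫⁻ x, ENNReal.ofReal (g x) ^ s).toReal := by
    intro s hs
    rw [hY, integral_eq_lintegral_of_nonneg_ae
      (Filter.Eventually.of_forall fun x => Real.rpow_nonneg (hg0 x) s)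
      (hgm.pow_const s).aestronglyMeasurable]
    congr 1
    apply lintegral_congr
    intro x
    rw [ENNReal.ofReal_rpow_of_nonneg (hg0 x) hs.le]
  have hZa : (∫⁻ x, ENNReal.ofReal (g x) ^ a) ≠ 0 ∧ (∫⁻ x, ENNReal.ofReal (g x) ^ a) ≠ ∞ := by
    rw [hYZ a ha, ENNReal.toReal_pos_iff] at hYT
    exact ⟨hYT.1.ne', hYT.2.ne⟩
  have hpos : ∀ s : ℝ, 0 < s → (∫⁻ x, ENNReal.ofReal (g x) ^ s) ≠ 0 := by
    intro s hs h0
    apply hZa.1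
    rw [lintegral_eq_zero_iff (hm _)] at h0 ⊢
    filter_upwards [h0] with x hx
    simp only [Pi.zero_apply, ENNReal.rpow_eq_zero_iff_of_pos hs] at hx
    simp [hx, ENNReal.zero_rpow_of_pos ha]
  have key := fun {p q s t u : ℝ} => sc_pl n β g hgm hg0 hlc (p := p) (q := q) (s := s) (t := t) (u := u)
  have hfin : ∀ s : ℝ, 0 < s → (∫⁻ x, ENNReal.ofReal (g x) ^ s) ≠ ∞ := by
    intro s hs htop
    have hp : 0 < a / (2 * (s + a)) := by positivity
    have hq : 0 < 1 - a / (2 * (s + a)) := by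
      rw [sub_pos, div_lt_one (by positivity)]; linarith
    have hps : 0 < a - a / (2 * (s + a)) * s := by
      have : a - a / (2 * (s + a)) * s = a * (s + 2 * a) / (2 * (s + a)) := by
        field_simp; ring
      rw [this]; positivity
    set p := a / (2 * (s + a))
    have h := key (p := p) (q := 1 - p) (s := s) (t := (a - p * s) / (1 - p)) (u := a)
      hp hq (by ring) hs (by positivity) (by field_simp; ring)
    rw [htop, ENNReal.mul_top (by simpa using pow_pos hs n), ENNReal.top_rpow_of_pos hp,
      ENNReal.top_mul] at h
    · refine absurd (top_le_iff.1 h) ?_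
      exact ENNReal.mul_ne_top ENNReal.ofReal_ne_top
        (ENNReal.mul_ne_top ENNReal.ofReal_ne_top hZa.2)
    · have ht : 0 < (a - p * s) / (1 - p) := by positivity
      rw [Ne, ENNReal.rpow_eq_zero_iff_of_pos hq]
      exact mul_ne_zero (by simpa using pow_pos ht n) (hpos _ ht)
  have hYpos : ∀ s, 0 < s → 0 < Y s := by
    intro s hs
    rw [hYZ s hs]
    exact ENNReal.toReal_pos (hpos s hs) (hfin s hs)
  have core := core_real n hn β (fun s => Real.log (Y s)) ?_ ?_ T T' hT hT'
  · rw [← hadef, ← hbdef] at core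
    set c := (a + b) / 2 with hcdef
    have hint : ∀ x, Real.sqrt ((g x ^ a / Y a) * (g x ^ b / Y b))
        = g x ^ c / Real.sqrt (Y a * Y b) := by
      intro x
      rw [div_mul_div_comm, Real.sqrt_div' _ (by positivity),
        ← Real.rpow_add_of_nonneg (hg0 x) ha.le hb.le, show a + b = c * (2:ℕ) by rw [hcdef]; push_cast; ring,
        Real.rpow_mul_natCast (hg0 x), Real.sqrt_sq (Real.rpow_nonneg (hg0 x) c)]
    simp_rw [hint]
    rw [integral_div, ← hY, ← Real.exp_log (div_pos hYTT (Real.sqrt_pos.2 (mul_pos hYT hYT')))]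
    apply Real.exp_le_exp.2
    rw [Real.log_div hYTT.ne' (Real.sqrt_pos.2 (mul_pos hYT hYT')).ne', Real.log_sqrt (by positivity),
      Real.log_mul hYT.ne' hYT'.ne']
    linarith
  · intro p q s t hp hq hpq hs ht
    have hu : 0 < p * s + q * t := by positivity
    have h := ENNReal.lintegral_mul_norm_pow_le (μ := volume) (hm s).aemeasurable (hm t).aemeasurable
      hp.le hq.le hpq
    have e : ∀ x, (ENNReal.ofReal (g x) ^ s) ^ p * (ENNReal.ofReal (g x) ^ t) ^ q
        = ENNReal.ofReal (g x) ^ (p * s + q * t) := by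
      intro x
      rw [← ENNReal.rpow_mul, ← ENNReal.rpow_mul,
        ← ENNReal.rpow_add_of_nonneg _ _ (by positivity) (by positivity), mul_comm s, mul_comm t]
    simp_rw [e] at h
    have h2 := ENNReal.toReal_mono (ENNReal.mul_ne_top
      (ENNReal.rpow_ne_top_of_nonneg hp.le (hfin s hs))
      (ENNReal.rpow_ne_top_of_nonneg hq.le (hfin t ht))) h
    rw [ENNReal.toReal_mul, ← ENNReal.toReal_rpow, ← ENNReal.toReal_rpow, ← hYZ _ hs, ← hYZ _ ht,
      ← hYZ _ hu] at h2
    have ys := hYpos s hs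
    have yt := hYpos t ht
    have h3 := Real.log_le_log (hYpos _ hu) h2
    rwa [Real.log_mul (by positivity) (by positivity), Real.log_rpow ys, Real.log_rpow yt] at h3
  · intro p q s t hp hq hpq hs ht
    have hu : 0 < p * s + q * t := by positivity
    have h := key hp hq hpq hs ht rfl
    have h2 := ENNReal.toReal_mono (ENNReal.mul_ne_top ENNReal.ofReal_ne_top
        (ENNReal.mul_ne_top ENNReal.ofReal_ne_top (hfin _ hu))) h
    simp only [ENNReal.toReal_mul, ← ENNReal.toReal_rpow] at h2
    rw [← hYZ _ hs, ← hYZ _ ht, ← hYZ _ hu, ENNReal.toReal_ofReal (by positivity),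
      ENNReal.toReal_ofReal (by positivity), ENNReal.toReal_ofReal (by positivity),
      ENNReal.toReal_ofReal (by positivity)] at h2
    have ys := hYpos s hs
    have yt := hYpos t ht
    have yu := hYpos _ hu
    have h3 := Real.log_le_log (by positivity) h2
    rw [Real.log_mul (by positivity) (by positivity), Real.log_rpow (by positivity),
      Real.log_rpow (by positivity), Real.log_mul (by positivity) (by positivity),
      Real.log_mul (by positivity) (by positivity), Real.log_mul (by positivity) (by positivity),
      Real.log_mul (by positivity) (by positivity), Real.log_exp, Real.log_pow, Real.log_pow,
      Real.log_pow] at h3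
    linarith
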